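/- Let h be a symmetric bilinear form on V with associated symmetric endomorphism H. Every Weyl tensor W on V satisfies ⟨Ric_{h⧆g}(W), W⟩ = −(n−2)·⟨HW, W⟩ + 4·tr(h)·|W|². -/

import Mathlib

/-!
Writing `R = h ⧆ g`, one has `R(X,Y)Z = h(X,Z)Y − g(Y,Z)HX + g(X,Z)HY − h(Y,Z)X`
(`curvOp_knProd`). In `Ric_R(W)` the endomorphism `R(Xᵢ,eⱼ)` acts on some slot `l`.

* For `l = i` the sum over `j` is the Ricci contraction of `h ⧆ g` (`sum_curvOp_diag`); these four
  terms give `−(n−2) HW + 4 tr(h) W`, which is the right-hand side.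
* For `l ≠ i` the terms containing `h(Xᵢ,X_l)` or `g(Xᵢ,X_l)` vanish after pairing with `W`, because
  `W` is trace-free in every pair of slots. What remains swaps the two slots and inserts `H` in
  one of them (`sumQuad_offdiag`). Put `A = Σ W(Hx,y,z,t) W(x,y,z,t)` and
  `X = Σ W(Hx,z,y,t) W(x,y,z,t)`, summed over basis vectors. The four ordered pairs inside an
  antisymmetric block contribute `−2A` each and the eight others `2X` each. The first Bianchi
  identity gives `A = 2X`, so the off-diagonal terms cancel.
-/

open scoped RealInnerProductSpace BigOperators
open Finset

noncomputable section

variable {V : Type*} [NormedAddCommGroup V] [InnerProductSpace ℝ V]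

/-- The action `(L T)(X₁,…,X_k) = −Σᵢ T(X₁,…,L(Xᵢ),…,X_k)` of a map `L : V → V`
on a `(0,k)`-tensor `T`. -/
def tact {k : ℕ} (L : V → V) (T : (Fin k → V) → ℝ) (X : Fin k → V) : ℝ :=
  -∑ i, T (Function.update X i (L (X i)))

/-- The Kulkarni–Nomizu product of two bilinear forms. -/
def knProd (s₁ s₂ : V → V → ℝ) (X Y Z W : V) : ℝ :=
  s₁ X Z * s₂ Y W - s₁ X W * s₂ Y Z + s₁ Y W * s₂ X Z - s₁ Y Z * s₂ X W

/-- The inner product `g` as a bilinear form. -/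
def gf (X Y : V) : ℝ := ⟪X, Y⟫

/-- The curvature endomorphism `R(X,Y)`, determined by `g(R(X,Y)Z,W) = R(X,Y,Z,W)`,
expressed via the orthonormal basis `e`. -/
def curvOp {n : ℕ} (e : Fin n → V) (R : V → V → V → V → ℝ) (X Y Z : V) : V :=
  ∑ a, R X Y Z (e a) • e a

/-- The curvature term `Ric_R(T)(X₁,…,X_k) = Σᵢ Σⱼ ((R(Xᵢ,eⱼ))T)(X₁,…,eⱼ,…,X_k)`. -/
def ricTerm {n k : ℕ} (e : Fin n → V) (R : V → V → V → V → ℝ)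
    (T : (Fin k → V) → ℝ) (X : Fin k → V) : ℝ :=
  ∑ i : Fin k, ∑ j : Fin n, tact (curvOp e R (X i) (e j)) T (Function.update X i (e j))

/-- The inner product of two `(0,k)`-tensors with respect to the orthonormal basis `e`. -/
def tinner {n k : ℕ} (e : Fin n → V) (S T : (Fin k → V) → ℝ) : ℝ :=
  ∑ I : Fin k → Fin n, S (fun m => e (I m)) * T (fun m => e (I m))

/-- The skew endomorphism `(A ∧ B)Z = g(A,Z)B − g(B,Z)A`. -/
def wedgeOp (A B Z : V) : V := ⟪A, Z⟫ • B - ⟪B, Z⟫ • A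

section Aux

variable {n : ℕ}

set_option linter.unusedSectionVars false

/-- The sum of `f` over all quadruples of basis vectors. -/
def sumQuad (e : Fin n → V) (f : V → V → V → V → ℝ) : ℝ :=
  ∑ a, ∑ b, ∑ c, ∑ d, f (e a) (e b) (e c) (e d)

lemma sumQuad_swap12 (e : Fin n → V) (f : V → V → V → V → ℝ) :
    sumQuad e f = sumQuad e (fun x y z t => f y x z t) :=
  Finset.sum_comm

lemma sumQuad_swap23 (e : Fin n → V) (f : V → V → V → V → ℝ) :
    sumQuad e f = sumQuad e (fun x y z t => f x z y t) :=
  Finset.sum_congr rfl fun _ _ => Finset.sum_comm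

lemma sumQuad_swap34 (e : Fin n → V) (f : V → V → V → V → ℝ) :
    sumQuad e f = sumQuad e (fun x y z t => f x y t z) :=
  Finset.sum_congr rfl fun _ _ => Finset.sum_congr rfl fun _ _ => Finset.sum_comm

lemma sumQuad_congr (e : Fin n → V) {f g : V → V → V → V → ℝ}
    (hfg : ∀ x y z t, f x y z t = g x y z t) : sumQuad e f = sumQuad e g := by
  simp only [sumQuad, hfg]

lemma sumQuad_add (e : Fin n → V) (f g : V → V → V → V → ℝ) :
    sumQuad e (fun x y z t => f x y z t + g x y z t) = sumQuad e f + sumQuad e g := by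
  simp only [sumQuad, Finset.sum_add_distrib]

lemma sumQuad_mul (e : Fin n → V) (r : ℝ) (f : V → V → V → V → ℝ) :
    sumQuad e (fun x y z t => r * f x y z t) = r * sumQuad e f := by
  simp only [sumQuad, Finset.mul_sum]

lemma tinner_eq_sumQuad (e : Fin n → V) (S T : (Fin 4 → V) → ℝ) :
    tinner e S T = sumQuad e (fun x y z t => S ![x, y, z, t] * T ![x, y, z, t]) := by
  have key : ∀ f : (Fin 4 → Fin n) → ℝ,
      ∑ I, f I = ∑ a, ∑ b, ∑ c, ∑ d, f ![a, b, c, d] := by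
    intro f
    rw [← (Fin.consEquiv fun _ : Fin 4 => Fin n).sum_comp, Fintype.sum_prod_type]
    refine Finset.sum_congr rfl fun a _ => ?_
    rw [← (Fin.consEquiv fun _ : Fin 3 => Fin n).sum_comp, Fintype.sum_prod_type]
    refine Finset.sum_congr rfl fun b _ => ?_
    rw [← (Fin.consEquiv fun _ : Fin 2 => Fin n).sum_comp, Fintype.sum_prod_type]
    refine Finset.sum_congr rfl fun c _ => ?_
    rw [← (Fin.consEquiv fun _ : Fin 1 => Fin n).sum_comp, Fintype.sum_prod_type]
    refine Finset.sum_congr rfl fun d _ => ?_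
    rw [Fintype.sum_unique]
    congr 1
  have hv : ∀ a b c d : Fin n,
      (fun m => e (![a, b, c, d] m)) = ![e a, e b, e c, e d] := by
    intro a b c d
    ext i
    fin_cases i <;> rfl
  simp only [tinner, key, hv, sumQuad]

lemma update_vec0 {α : Type*} (x y z t u : α) :
    Function.update ![x, y, z, t] 0 u = ![u, y, z, t] := by
  ext i; fin_cases i <;> rfl

lemma update_vec1 {α : Type*} (x y z t u : α) :
    Function.update ![x, y, z, t] 1 u = ![x, u, z, t] := by
  ext i; fin_cases i <;> rfl

lemma update_vec2 {α : Type*} (x y z t u : α) :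
    Function.update ![x, y, z, t] 2 u = ![x, y, u, t] := by
  ext i; fin_cases i <;> rfl

lemma update_vec3 {α : Type*} (x y z t u : α) :
    Function.update ![x, y, z, t] 3 u = ![x, y, z, u] := by
  ext i; fin_cases i <;> rfl

/-- `(h ⧆ g)(X,Y)Z = h(X,Z)Y − g(Y,Z)HX + g(X,Z)HY − h(Y,Z)X`. -/
lemma curvOp_knProd (e : OrthonormalBasis (Fin n) ℝ V) (H : V →ₗ[ℝ] V) (h : V → V → ℝ)
    (hh : ∀ X Y : V, h X Y = ⟪H X, Y⟫) (X Y Z : V) :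
    curvOp e (knProd h gf) X Y Z =
      h X Z • Y - (⟪Y, Z⟫ : ℝ) • H X + (⟪X, Z⟫ : ℝ) • H Y - h Y Z • X := by
  have ex : ∀ u : V, ∑ a, (⟪u, e a⟫ : ℝ) • e a = u := fun u => by
    simpa only [real_inner_comm] using e.sum_repr' u
  simp only [curvOp, knProd, gf, hh, add_smul, sub_smul, Finset.sum_add_distrib,
    Finset.sum_sub_distrib]
  simp only [mul_comm _ (⟪Y, Z⟫ : ℝ), mul_comm _ (⟪X, Z⟫ : ℝ), mul_smul, ← Finset.smul_sum, ex]

/-- The Ricci contraction of `h ⧆ g`, with the sign dictated by `g(R(X,Y)Z,W) = R(X,Y,Z,W)`. -/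
lemma sum_curvOp_diag (e : OrthonormalBasis (Fin n) ℝ V) (H : V →ₗ[ℝ] V) (h : V → V → ℝ)
    (hh : ∀ X Y : V, h X Y = ⟪H X, Y⟫) (x : V) :
    ∑ j, curvOp e (knProd h gf) x (e j) (e j) =
      -((n : ℝ) - 2) • H x - (∑ a, h (e a) (e a)) • x := by
  have ex : ∀ u : V, ∑ a, (⟪u, e a⟫ : ℝ) • e a = u := fun u => by
    simpa only [real_inner_comm] using e.sum_repr' u
  have exH : ∑ a, (⟪x, e a⟫ : ℝ) • H (e a) = H x := by
    simpa only [map_sum, map_smul] using congrArg H (ex x)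
  have e1 : ∀ a, (⟪e a, e a⟫ : ℝ) = 1 := fun a => by simp
  simp only [curvOp_knProd e H h hh, Finset.sum_add_distrib, Finset.sum_sub_distrib, exH, e1,
    ← Finset.sum_smul]
  simp only [hh, ex, Finset.sum_const, Finset.card_univ, Fintype.card_fin, nsmul_eq_mul, mul_one]
  module

/-- The off-diagonal part of the curvature term of `h ⧆ g` for two slots of a tensor, the tensor
being viewed as a bilinear form `B` in these slots: two trace terms and two swaps of arguments. -/
lemma sum_curvOp_offdiag (e : OrthonormalBasis (Fin n) ℝ V) (H : V →ₗ[ℝ] V)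
    (hHsym : ∀ X Y : V, ⟪H X, Y⟫ = ⟪X, H Y⟫) (h : V → V → ℝ)
    (hh : ∀ X Y : V, h X Y = ⟪H X, Y⟫) (B : V →ₗ[ℝ] V →ₗ[ℝ] ℝ) (x y : V) :
    ∑ j, B (e j) (curvOp e (knProd h gf) x (e j) y) =
      h x y * ∑ j, B (e j) (e j) - B y (H x) + ⟪x, y⟫ * ∑ j, B (e j) (H (e j)) - B (H y) x := by
  have ex : ∀ u v : V, ∑ a, (⟪e a, u⟫ : ℝ) * B (e a) v = B u v := fun u v => by
    have := congrArg (fun s => B s v) (e.sum_repr' u)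
    simpa only [map_sum, map_smul, LinearMap.sum_apply, LinearMap.smul_apply, smul_eq_mul]
      using this
  simp only [curvOp_knProd e H h hh, map_add, map_sub, map_smul, smul_eq_mul,
    Finset.sum_add_distrib, Finset.sum_sub_distrib, ← Finset.mul_sum, ex]
  simp only [hh, hHsym (e _) y, ex]

/-- For a tensor trace-free in its first two slots, the `g`- and `h`-trace terms drop out of the
off-diagonal contribution of these slots once it is paired with the tensor. Here `B z t` is the
tensor as a bilinear form in the first two slots, the other two being `z` and `t`. -/
lemma sumQuad_offdiag (e : OrthonormalBasis (Fin n) ℝ V) (H : V →ₗ[ℝ] V)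
    (hHsym : ∀ X Y : V, ⟪H X, Y⟫ = ⟪X, H Y⟫) (h : V → V → ℝ)
    (hh : ∀ X Y : V, h X Y = ⟪H X, Y⟫) (B : V → V → V →ₗ[ℝ] V →ₗ[ℝ] ℝ)
    (htr : ∀ z t, ∑ a, B z t (e a) (e a) = 0) :
    sumQuad e (fun x y z t =>
        (∑ j, B z t (e j) (curvOp e (knProd h gf) x (e j) y)) * B z t x y) =
      -sumQuad e (fun x y z t => B z t y (H x) * B z t x y)
        - sumQuad e (fun x y z t => B z t (H y) x * B z t x y) := by
  have hg : sumQuad e (fun x y z t => (⟪x, y⟫ : ℝ) *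
      ((∑ j, B z t (e j) (H (e j))) * B z t x y)) = 0 := by
    have h0 : ∀ z t : V, ∑ a, ∑ b, (⟪e a, e b⟫ : ℝ) *
        ((∑ j, B z t (e j) (H (e j))) * B z t (e a) (e b)) = 0 := by
      intro z t
      simp only [e.inner_eq_ite, ite_mul, one_mul, zero_mul, Finset.sum_ite_eq, Finset.mem_univ,
        if_true, ← Finset.mul_sum, htr, mul_zero]
    rw [sumQuad_swap23, sumQuad_swap12, sumQuad_swap34, sumQuad_swap23]
    exact Finset.sum_eq_zero fun c _ => Finset.sum_eq_zero fun d _ => h0 (e c) (e d)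
  have hs : sumQuad e (fun x y z t =>
        (∑ j, B z t (e j) (curvOp e (knProd h gf) x (e j) y)) * B z t x y) =
      sumQuad e (fun x y z t => -1 * (B z t y (H x) * B z t x y)
        + -1 * (B z t (H y) x * B z t x y)
        + (⟪x, y⟫ : ℝ) * ((∑ j, B z t (e j) (H (e j))) * B z t x y)) := by
    congr 1
    funext x y z t
    rw [sum_curvOp_offdiag e H hHsym h hh, htr]
    ring
  rw [hs, sumQuad_add, sumQuad_add, sumQuad_mul, sumQuad_mul, hg]
  ring

end Aux

/-- for a Weyl tensor, `⟨Ric_{h⧆g}(W), W⟩ = −(n−2)⟨HW,W⟩ + 4 tr(h)|W|²`. -/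
theorem stmt12 {n : ℕ} (e : OrthonormalBasis (Fin n) ℝ V)
    (H : V →ₗ[ℝ] V) (hHsym : ∀ X Y : V, ⟪H X, Y⟫ = ⟪X, H Y⟫)
    (h : V → V → ℝ) (hh : ∀ X Y : V, h X Y = ⟪H X, Y⟫)
    (W : MultilinearMap ℝ (fun _ : Fin 4 => V) ℝ)
    (hA : ∀ x y z w : V, W ![x, y, z, w] = -W ![y, x, z, w])
    (hP : ∀ x y z w : V, W ![x, y, z, w] = W ![z, w, x, y])
    (hB : ∀ x y z w : V,
      W ![x, y, z, w] + W ![y, z, x, w] + W ![z, x, y, w] = 0)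
    (hRic : ∀ x z : V, (∑ a : Fin n, W ![x, e a, z, e a]) = 0) :
    tinner ⇑e (ricTerm ⇑e (knProd h gf) ⇑W) ⇑W =
      -((n : ℝ) - 2) * tinner ⇑e (tact ⇑H ⇑W) ⇑W
      + 4 * (∑ a : Fin n, h (e a) (e a)) * tinner ⇑e ⇑W ⇑W := by
  have hA' : ∀ x y z w : V, W ![x, y, z, w] = -W ![x, y, w, z] := fun x y z w => by
    rw [hP, hA, hP w z]
  -- `B₁` pairs the slots `1, 2` of `W`, and `B₂` the slots `1, 3`.
  let B₁ : V → V → V →ₗ[ℝ] V →ₗ[ℝ] ℝ := fun z t => LinearMap.mk₂ ℝ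
    (fun x y => W ![x, y, z, t])
    (fun u v y => by simpa only [update_vec0] using W.map_update_add ![u, y, z, t] 0 u v)
    (fun r u y => by simpa only [update_vec0] using W.map_update_smul ![u, y, z, t] 0 r u)
    (fun x u v => by simpa only [update_vec1] using W.map_update_add ![x, u, z, t] 1 u v)
    (fun r x u => by simpa only [update_vec1] using W.map_update_smul ![x, u, z, t] 1 r u)
  let B₂ : V → V → V →ₗ[ℝ] V →ₗ[ℝ] ℝ := fun z t => LinearMap.mk₂ ℝ
    (fun x y => W ![x, z, y, t])
    (fun u v y => by simpa only [update_vec0] using W.map_update_add ![u, z, y, t] 0 u v)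
    (fun r u y => by simpa only [update_vec0] using W.map_update_smul ![u, z, y, t] 0 r u)
    (fun x u v => by simpa only [update_vec2] using W.map_update_add ![x, z, u, t] 2 u v)
    (fun r x u => by simpa only [update_vec2] using W.map_update_smul ![x, z, u, t] 2 r u)
  have tr₁ : ∀ z t, ∑ a, B₁ z t (e a) (e a) = 0 := fun z t =>
    Finset.sum_eq_zero fun a _ => by
      have := hA (e a) (e a) z t
      change W ![e a, e a, z, t] = 0
      linarith
  have tr₂ : ∀ z t, ∑ a, B₂ z t (e a) (e a) = 0 := fun z t => by
    rw [← hRic z t]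
    refine Finset.sum_congr rfl fun a _ => ?_
    change W ![e a, z, e a, t] = _
    rw [hA, hA', neg_neg]
  have Q₁ := sumQuad_offdiag e H hHsym h hh B₁ tr₁
  have Q₂ := sumQuad_offdiag e H hHsym h hh B₂ tr₂
  simp only [B₁, B₂, LinearMap.mk₂_apply] at Q₁ Q₂
  set R := curvOp e (knProd h gf) with hR
  have hAA : ∀ x y z w : V, W ![x, y, z, w] = W ![y, x, w, z] := fun x y z w => by
    rw [hA, hA', neg_neg]
  have hPA : ∀ x y z w : V, W ![x, y, z, w] = -W ![z, w, y, x] := fun x y z w => by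
    rw [hP, hA']
  have hPA' : ∀ x y z w : V, W ![x, y, z, w] = -W ![w, z, x, y] := fun x y z w => by
    rw [hP, hA]
  have hPAA : ∀ x y z w : V, W ![x, y, z, w] = W ![w, z, y, x] := fun x y z w => by
    rw [hP, hAA]
  set q1 := sumQuad e (fun x y z t =>
    (∑ j, W ![e j, R x (e j) y, z, t]) * W ![x, y, z, t]) with hq1
  set q2 := sumQuad e (fun x y z t =>
    (∑ j, W ![e j, z, R x (e j) y, t]) * W ![x, z, y, t]) with hq2
  -- Up to the symmetries of `W`, the off-diagonal contribution of an ordered pair of slots is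
  -- `q1` when the pair lies in one antisymmetric block, and `q2` otherwise.
  have O02 : sumQuad e (fun x y z t => (∑ j, W ![e j, y, R x (e j) z, t]) * W ![x, y, z, t]) =
      q2 := by
    refine (sumQuad_swap23 e _).trans ?_
    rfl
  have O03 : sumQuad e (fun x y z t => (∑ j, W ![e j, y, z, R x (e j) t]) * W ![x, y, z, t]) =
      q2 := by
    refine (sumQuad_swap34 e _).trans ?_
    refine (sumQuad_swap23 e _).trans ?_
    refine sumQuad_congr e fun x y z t => ?_
    rw [hA' x z t y]
    simp only [hA' (e _) z t (R x (e _) y), Finset.sum_neg_distrib, neg_mul_neg]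
  have O10 : sumQuad e (fun x y z t => (∑ j, W ![R y (e j) x, e j, z, t]) * W ![x, y, z, t]) =
      q1 := by
    refine (sumQuad_swap12 e _).trans ?_
    refine sumQuad_congr e fun x y z t => ?_
    rw [hA y x z t]
    simp only [hA (R x (e _) y) (e _) z t, Finset.sum_neg_distrib, neg_mul_neg]
  have O12 : sumQuad e (fun x y z t => (∑ j, W ![x, e j, R y (e j) z, t]) * W ![x, y, z, t]) =
      q2 := by
    refine (sumQuad_swap12 e _).trans ?_
    refine (sumQuad_swap23 e _).trans ?_
    refine sumQuad_congr e fun x y z t => ?_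
    rw [hA z x y t]
    simp only [hA z (e _) (R x (e _) y) t, Finset.sum_neg_distrib, neg_mul_neg]
  have O13 : sumQuad e (fun x y z t => (∑ j, W ![x, e j, z, R y (e j) t]) * W ![x, y, z, t]) =
      q2 := by
    refine (sumQuad_swap34 e _).trans ?_
    refine (sumQuad_swap12 e _).trans ?_
    refine (sumQuad_swap23 e _).trans ?_
    refine sumQuad_congr e fun x y z t => ?_
    rw [hAA z x t y]
    simp only [hAA z (e _) t (R x (e _) y)]
  have O20 : sumQuad e (fun x y z t => (∑ j, W ![R z (e j) x, y, e j, t]) * W ![x, y, z, t]) =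
      q2 := by
    refine (sumQuad_swap23 e _).trans ?_
    refine (sumQuad_swap12 e _).trans ?_
    refine (sumQuad_swap34 e _).trans ?_
    refine sumQuad_congr e fun x y z t => ?_
    rw [hP y t x z]
    simp only [hP (R x (e _) y) t (e _) z]
  have O21 : sumQuad e (fun x y z t => (∑ j, W ![x, R z (e j) y, e j, t]) * W ![x, y, z, t]) =
      q2 := by
    refine (sumQuad_swap23 e _).trans ?_
    refine (sumQuad_swap12 e _).trans ?_
    refine (sumQuad_swap23 e _).trans ?_
    refine (sumQuad_swap34 e _).trans ?_
    refine sumQuad_congr e fun x y z t => ?_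
    rw [hPA t y x z]
    simp only [hPA t (R x (e _) y) (e _) z, Finset.sum_neg_distrib, neg_mul_neg]
  have O23 : sumQuad e (fun x y z t => (∑ j, W ![x, y, e j, R z (e j) t]) * W ![x, y, z, t]) =
      q1 := by
    refine (sumQuad_swap23 e _).trans ?_
    refine (sumQuad_swap12 e _).trans ?_
    refine (sumQuad_swap34 e _).trans ?_
    refine (sumQuad_swap23 e _).trans ?_
    refine sumQuad_congr e fun x y z t => ?_
    rw [hP z t x y]
    simp only [hP z t (e _) (R x (e _) y)]
  have O30 : sumQuad e (fun x y z t => (∑ j, W ![R t (e j) x, y, z, e j]) * W ![x, y, z, t]) =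
      q2 := by
    refine (sumQuad_swap34 e _).trans ?_
    refine (sumQuad_swap23 e _).trans ?_
    refine (sumQuad_swap12 e _).trans ?_
    refine (sumQuad_swap34 e _).trans ?_
    refine sumQuad_congr e fun x y z t => ?_
    rw [hPA' y t z x]
    simp only [hPA' (R x (e _) y) t z (e _), Finset.sum_neg_distrib, neg_mul_neg]
  have O31 : sumQuad e (fun x y z t => (∑ j, W ![x, R t (e j) y, z, e j]) * W ![x, y, z, t]) =
      q2 := by
    refine (sumQuad_swap34 e _).trans ?_
    refine (sumQuad_swap23 e _).trans ?_
    refine (sumQuad_swap12 e _).trans ?_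
    refine (sumQuad_swap23 e _).trans ?_
    refine (sumQuad_swap34 e _).trans ?_
    refine sumQuad_congr e fun x y z t => ?_
    rw [hPAA t y z x]
    simp only [hPAA t (R x (e _) y) z (e _)]
  have O32 : sumQuad e (fun x y z t => (∑ j, W ![x, y, R t (e j) z, e j]) * W ![x, y, z, t]) =
      q1 := by
    refine (sumQuad_swap34 e _).trans ?_
    refine (sumQuad_swap23 e _).trans ?_
    refine (sumQuad_swap12 e _).trans ?_
    refine (sumQuad_swap34 e _).trans ?_
    refine (sumQuad_swap23 e _).trans ?_
    refine sumQuad_congr e fun x y z t => ?_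
    rw [hPA' z t y x]
    simp only [hPA' z t (R x (e _) y) (e _), Finset.sum_neg_distrib, neg_mul_neg]
  -- `A` is the contraction of `W` with itself through `H`, and `X` its variant with two middle
  -- slots exchanged; the Bianchi identity yields `A = 2 X`.
  set A := sumQuad e (fun x y z t => W ![H x, y, z, t] * W ![x, y, z, t]) with hAdef
  set X := sumQuad e (fun x y z t => W ![H x, z, y, t] * W ![x, y, z, t]) with hX
  have a1 : sumQuad e (fun x y z t => W ![y, H x, z, t] * W ![x, y, z, t]) = -1 * A := by
    rw [hAdef, ← sumQuad_mul]
    refine sumQuad_congr e fun x y z t => ?_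
    rw [hA y (H x)]
    ring
  have a2 : sumQuad e (fun x y z t => W ![H y, x, z, t] * W ![x, y, z, t]) = -1 * A := by
    refine (sumQuad_swap12 e _).trans ?_
    rw [hAdef, ← sumQuad_mul]
    refine sumQuad_congr e fun x y z t => ?_
    rw [hA y x]
    ring
  have x1 : sumQuad e (fun x y z t => W ![y, z, H x, t] * W ![x, z, y, t]) = X := by
    refine (sumQuad_swap23 e _).trans ?_
    refine (sumQuad_swap34 e _).trans ?_
    refine sumQuad_congr e fun x y z t => ?_
    rw [hPA t y (H x) z, hA' x y t z]
    ring
  have x2 : sumQuad e (fun x y z t => W ![H y, z, x, t] * W ![x, z, y, t]) = X := by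
    refine (sumQuad_swap12 e _).trans ?_
    refine (sumQuad_swap23 e _).trans ?_
    refine (sumQuad_swap34 e _).trans ?_
    refine (sumQuad_swap23 e _).trans ?_
    refine sumQuad_congr e fun x y z t => ?_
    rw [hA' (H x) z t y, hPA t z x y, hA' x y z t]
    ring
  have x3 : sumQuad e (fun x y z t => W ![y, z, H x, t] * W ![x, y, z, t]) = -1 * X := by
    refine (sumQuad_swap34 e _).trans ?_
    rw [hX, ← sumQuad_mul]
    refine sumQuad_congr e fun x y z t => ?_
    rw [hP y t (H x) z, hA' x y t z]
    ring
  have hAX : A = 2 * X := by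
    have hz : A + sumQuad e (fun x y z t => W ![y, z, H x, t] * W ![x, y, z, t]) + -1 * X = 0 := by
      rw [hAdef, hX, ← sumQuad_mul, ← sumQuad_add, ← sumQuad_add]
      have h0 : sumQuad e (fun _ _ _ _ => (0 : ℝ)) = 0 := by simp [sumQuad]
      rw [← h0]
      refine sumQuad_congr e fun x y z t => ?_
      have h1 := hB (H x) y z t
      rw [hA z (H x)] at h1
      linear_combination W ![x, y, z, t] * h1
    rw [x3] at hz
    linarith
  rw [a1, a2] at Q₁
  rw [x1, x2] at Q₂
  -- The diagonal terms produce the right-hand side.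
  have D0 : ∀ x y z t, ∑ j, W ![R x (e j) (e j), y, z, t] = -((n : ℝ) - 2) * W ![H x, y, z, t]
      - (∑ a, h (e a) (e a)) * W ![x, y, z, t] := fun x y z t => by
    simpa only [map_sum, map_sub, map_smul, smul_eq_mul, MultilinearMap.toLinearMap_apply,
      update_vec0] using
      congrArg (W.toLinearMap ![x, y, z, t] 0) (sum_curvOp_diag e H h hh x)
  have D1 : ∀ x y z t, ∑ j, W ![x, R y (e j) (e j), z, t] = -((n : ℝ) - 2) * W ![x, H y, z, t]
      - (∑ a, h (e a) (e a)) * W ![x, y, z, t] := fun x y z t => by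
    simp only [hA x _ z t, Finset.sum_neg_distrib, D0]
    ring
  have D2 : ∀ x y z t, ∑ j, W ![x, y, R z (e j) (e j), t] = -((n : ℝ) - 2) * W ![x, y, H z, t]
      - (∑ a, h (e a) (e a)) * W ![x, y, z, t] := fun x y z t => by
    simp only [hP x y _ t, D0]
  have D3 : ∀ x y z t, ∑ j, W ![x, y, z, R t (e j) (e j)] = -((n : ℝ) - 2) * W ![x, y, z, H t]
      - (∑ a, h (e a) (e a)) * W ![x, y, z, t] := fun x y z t => by
    simp only [hP x y z _, D1]
  have expand : tinner ⇑e (ricTerm ⇑e (knProd h gf) ⇑W) ⇑W =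
      sumQuad e (fun x y z t => -((n : ℝ) - 2) * (tact ⇑H ⇑W ![x, y, z, t] * W ![x, y, z, t])
        + 4 * (∑ a, h (e a) (e a)) * (W ![x, y, z, t] * W ![x, y, z, t])
        + -1 * ((∑ j, W ![e j, R x (e j) y, z, t]) * W ![x, y, z, t])
        + -1 * ((∑ j, W ![e j, y, R x (e j) z, t]) * W ![x, y, z, t])
        + -1 * ((∑ j, W ![e j, y, z, R x (e j) t]) * W ![x, y, z, t])
        + -1 * ((∑ j, W ![R y (e j) x, e j, z, t]) * W ![x, y, z, t])
        + -1 * ((∑ j, W ![x, e j, R y (e j) z, t]) * W ![x, y, z, t])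
        + -1 * ((∑ j, W ![x, e j, z, R y (e j) t]) * W ![x, y, z, t])
        + -1 * ((∑ j, W ![R z (e j) x, y, e j, t]) * W ![x, y, z, t])
        + -1 * ((∑ j, W ![x, R z (e j) y, e j, t]) * W ![x, y, z, t])
        + -1 * ((∑ j, W ![x, y, e j, R z (e j) t]) * W ![x, y, z, t])
        + -1 * ((∑ j, W ![R t (e j) x, y, z, e j]) * W ![x, y, z, t])
        + -1 * ((∑ j, W ![x, R t (e j) y, z, e j]) * W ![x, y, z, t])
        + -1 * ((∑ j, W ![x, y, R t (e j) z, e j]) * W ![x, y, z, t])) := by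
    rw [tinner_eq_sumQuad]
    refine sumQuad_congr e fun x y z t => ?_
    simp only [ricTerm, tact, Fin.sum_univ_four, update_vec0, update_vec1, update_vec2,
      update_vec3, Matrix.cons_val, ← hR, Finset.sum_neg_distrib, Finset.sum_add_distrib,
      D0, D1, D2, D3]
    ring
  rw [expand, tinner_eq_sumQuad, tinner_eq_sumQuad]
  simp only [sumQuad_add, sumQuad_mul]
  rw [O02, O03, O10, O12, O13, O20, O21, O23, O30, O31, O32, ← hq1, Q₁, Q₂, hAX]
  ring
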